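/- arXiv:2403.05836 — 2 statements merged into one kernel-verified Lean document; each statement's English description precedes it below -/
import Mathlib

section
/- Let τ₂ be the topology on the bicyclic monoid C(p,q) generated by taking, as a neighbourhood base at each point q^i p^j, the family of sets O_n(q^i p^j) = {q^i p^j} ∪ (↓≼ q^{i+n} p^{j+n} \ {q^{i+n} p^{j+n}}) for n ∈ ℕ. Then (C(p,q), τ₂) has no isolated points, and consequently (C(p,q), τ₂) is not a Baire space. -/
/-- The bicyclic monoid `C(p,q)` modeled on `ℕ × ℕ`, where `(k, l)` represents `q^k p^l`:
`(k,l)·(m,n) = (k + (m ∸ l), n + (l ∸ m))`. -/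
def bmul (a b : ℕ × ℕ) : ℕ × ℕ := (a.1 + (b.1 - a.2), b.2 + (a.2 - b.1))

/-- The natural partial order on the bicyclic monoid: `x ≼ y` iff `x = y·e`
for some idempotent `e`. -/
def bLe (x y : ℕ × ℕ) : Prop := ∃ e : ℕ × ℕ, bmul e e = e ∧ x = bmul y e

/-- `↓≼ x`, the down-set of `x` with respect to the natural partial order. -/
def bDown (x : ℕ × ℕ) : Set (ℕ × ℕ) := {y | bLe y x}

/-- `O_n(q^i p^j) = {q^i p^j} ∪ (↓≼ q^{i+n} p^{j+n} \ {q^{i+n} p^{j+n}})`. -/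
def O2 (n : ℕ) (x : ℕ × ℕ) : Set (ℕ × ℕ) :=
  {x} ∪ (bDown (x.1 + n, x.2 + n) \ {(x.1 + n, x.2 + n)})

/-- The topology `τ₂` on the bicyclic monoid generated by the sets `O_n(q^i p^j)`
as a neighbourhood base at each point `q^i p^j`. -/
def tau2 : TopologicalSpace (ℕ × ℕ) :=
  TopologicalSpace.generateFrom {S | ∃ x : ℕ × ℕ, ∃ n : ℕ, S = O2 n x}

/-! Below `q^i p^j` lie exactly the points `q^(i+k) p^(j+k)`, so `O_n(x)` consists of `x` and of the
points more than `n` steps below `x` on its diagonal. These sets are therefore infinite, while any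
point other than `x` is avoided by `O_n(x)` for large `n`: the space is T₁ without isolated points.
A nonempty countable T₁ Baire space has an isolated point, because it is a countable union of closed
singletons, one of which must have nonempty interior. -/

open TopologicalSpace Set

theorem exists_isOpen_singleton_of_countable_baireSpace (X : Type*) [TopologicalSpace X] [T1Space X]
    [BaireSpace X] [Countable X] [Nonempty X] : ∃ x : X, IsOpen {x} := by
  obtain ⟨x, hx⟩ := nonempty_interior_of_iUnion_of_closed (fun x : X => isClosed_singleton)
    (iUnion_of_singleton X)
  have interior_eq : interior {x} = {x} := hx.subset_singleton_iff.1 interior_subset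
  exact ⟨x, interior_eq_iff_isOpen.1 interior_eq⟩

theorem bmul_self_eq_self_iff {e : ℕ × ℕ} : bmul e e = e ↔ ∃ k, e = (k, k) := by
  obtain ⟨a, b⟩ := e
  simp only [bmul, Prod.mk.injEq]
  grind

theorem bLe_iff_exists_add {x y : ℕ × ℕ} : bLe x y ↔ ∃ k, x = y + (k, k) := by
  simp only [bLe, bmul_self_eq_self_iff]
  constructor
  · rintro ⟨_, ⟨k, rfl⟩, rfl⟩
    refine ⟨k - y.2, ?_⟩
    simp only [bmul, Prod.ext_iff, Prod.fst_add, Prod.snd_add, true_and]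
    omega
  · rintro ⟨k, rfl⟩
    refine ⟨_, ⟨y.2 + k, rfl⟩, ?_⟩
    simp only [bmul, Prod.ext_iff, Prod.fst_add, Prod.snd_add]
    omega

theorem mem_O2_iff {n : ℕ} {x y : ℕ × ℕ} : y ∈ O2 n x ↔ y = x ∨ ∃ k > n, y = x + (k, k) := by
  simp only [O2, bDown, bLe_iff_exists_add, mem_union, mem_sdiff, mem_singleton_iff, mem_ofPred_eq]
  refine or_congr_right ⟨?_, ?_⟩
  · rintro ⟨⟨k, rfl⟩, hne⟩
    have hk : k ≠ 0 := by
      rintro rfl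
      exact hne rfl
    exact ⟨n + k, by omega, by ext <;> simp [add_assoc]⟩
  · rintro ⟨k, hk, rfl⟩
    refine ⟨⟨k - n, ?_⟩, ?_⟩
    · ext <;> simp only [Prod.fst_add, Prod.snd_add] <;> omega
    · simp only [Prod.ext_iff, Prod.fst_add, Prod.snd_add]
      omega

theorem self_mem_O2 (n : ℕ) (x : ℕ × ℕ) : x ∈ O2 n x :=
  mem_O2_iff.2 (Or.inl rfl)

theorem add_mem_O2 {n k : ℕ} (h : n < k) (x : ℕ × ℕ) : x + (k, k) ∈ O2 n x :=
  mem_O2_iff.2 (Or.inr ⟨k, h, rfl⟩)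

theorem O2_anti {m n : ℕ} (h : m ≤ n) (x : ℕ × ℕ) : O2 n x ⊆ O2 m x := by
  intro y hy
  rcases mem_O2_iff.1 hy with rfl | ⟨k, hk, rfl⟩
  · exact self_mem_O2 m y
  · exact add_mem_O2 (h.trans_lt hk) x

theorem O2_subset_of_mem {n : ℕ} {x y : ℕ × ℕ} (hy : y ∈ O2 n x) : O2 n y ⊆ O2 n x := by
  rcases mem_O2_iff.1 hy with rfl | ⟨k, _, rfl⟩
  · rfl
  intro z hz
  rcases mem_O2_iff.1 hz with rfl | ⟨l, hl, rfl⟩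
  · exact hy
  · rw [add_assoc, Prod.mk_add_mk]
    exact add_mem_O2 (by omega) x

theorem notMem_O2_fst {x y : ℕ × ℕ} (h : x ≠ y) : y ∉ O2 y.1 x := by
  rw [mem_O2_iff]
  rintro (rfl | ⟨k, hk, hy⟩)
  · exact h rfl
  · have hfst : y.1 = x.1 + k := congrArg Prod.fst hy
    omega

theorem isTopologicalBasis_O2 :
    @IsTopologicalBasis (ℕ × ℕ) tau2 {S | ∃ x : ℕ × ℕ, ∃ n : ℕ, S = O2 n x} := by
  let := tau2
  refine ⟨?_, ?_, rfl⟩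
  · rintro _ ⟨x, m, rfl⟩ _ ⟨y, n, rfl⟩ z ⟨hzx, hzy⟩
    exact ⟨O2 (max m n) z, ⟨z, max m n, rfl⟩, self_mem_O2 _ z, subset_inter
      ((O2_anti (le_max_left m n) z).trans (O2_subset_of_mem hzx))
      ((O2_anti (le_max_right m n) z).trans (O2_subset_of_mem hzy))⟩
  · exact eq_univ_of_forall fun x => mem_sUnion_of_mem (self_mem_O2 0 x) ⟨x, 0, rfl⟩

theorem isOpen_O2 (n : ℕ) (x : ℕ × ℕ) : @IsOpen (ℕ × ℕ) tau2 (O2 n x) :=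
  isOpen_generateFrom_of_mem ⟨x, n, rfl⟩

theorem exists_O2_subset_of_isOpen {U : Set (ℕ × ℕ)} (hU : @IsOpen (ℕ × ℕ) tau2 U) {x : ℕ × ℕ}
    (hx : x ∈ U) : ∃ n, O2 n x ⊆ U := by
  let := tau2
  obtain ⟨_, ⟨y, n, rfl⟩, hxy, hyU⟩ := isTopologicalBasis_O2.exists_subset_of_mem_open hx hU
  exact ⟨n, (O2_subset_of_mem hxy).trans hyU⟩

theorem not_isOpen_singleton_tau2 (x : ℕ × ℕ) : ¬ @IsOpen (ℕ × ℕ) tau2 {x} := by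
  intro hopen
  obtain ⟨n, hn⟩ := exists_O2_subset_of_isOpen hopen (mem_singleton x)
  have hx : x + (n + 1, n + 1) = x := hn (add_mem_O2 n.lt_succ_self x)
  simp at hx

theorem t1Space_tau2 : @T1Space (ℕ × ℕ) tau2 := by
  let := tau2
  exact t1Space_iff_exists_open.2 fun x y hxy =>
    ⟨O2 y.1 x, isOpen_O2 y.1 x, self_mem_O2 y.1 x, notMem_O2_fst hxy⟩

/-- Remark 1: `(C(p,q), τ₂)` has no isolated points and is not a Baire space. -/
theorem stmt6 :
    (∀ x : ℕ × ℕ, ¬ @IsOpen (ℕ × ℕ) tau2 {x}) ∧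
    ¬ @BaireSpace (ℕ × ℕ) tau2 := by
  refine ⟨not_isOpen_singleton_tau2, fun baire => ?_⟩
  let := tau2
  have := t1Space_tau2
  obtain ⟨x, hx⟩ := exists_isOpen_singleton_of_countable_baireSpace (ℕ × ℕ)
  exact not_isOpen_singleton_tau2 x hx
end

section
/- Let τ be a shift-continuous T₁ topology on the bicyclic monoid C(p,q) and fix i, j, m, n ∈ ℕ. Then the map x ↦ q^i p^m · x · q^n p^j maps ↓≼ q^m p^n onto ↓≼ q^i p^j (sending q^{m+k} p^{n+k} to q^{i+k} p^{j+k} for every k ∈ ℕ), the map x ↦ q^m p^i · x · q^j p^n maps ↓≼ q^i p^j onto ↓≼ q^m p^n, these two restrictions are mutually inverse, and each is a homeomorphism between the subspaces ↓≼ q^m p^n and ↓≼ q^i p^j of (C(p,q), τ). -/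
/-- The subspace topology on a subset `Y` of the bicyclic monoid. -/
def subT (τ : TopologicalSpace (ℕ × ℕ)) (Y : Set (ℕ × ℕ)) : TopologicalSpace Y :=
  TopologicalSpace.induced Subtype.val τ

/-!
The down-set `↓≼ q^a p^b` is the ray `{q^{a+k} p^{b+k} : k ∈ ℕ}`, and the two-sided translation
`x ↦ q^i p^m · x · q^n p^j` carries the `k`-th point of the ray from `q^m p^n` to the `k`-th point
of the ray from `q^i p^j`. Exchanging the roles of the rays gives the inverse, and both
translations are continuous on the whole monoid by shift-continuity.
-/

theorem bmul_self_eq_iff {e : ℕ × ℕ} : bmul e e = e ↔ e.1 = e.2 := by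
  simp only [bmul, Prod.ext_iff]
  omega

theorem bmul_mk_self (a b k : ℕ) : bmul (a, b) (k, k) = (a + (k - b), b + (k - b)) := by
  simp only [bmul, Prod.mk.injEq, true_and]
  omega

theorem mem_bDown_iff {a b : ℕ} {x : ℕ × ℕ} :
    x ∈ bDown (a, b) ↔ ∃ k : ℕ, x = (a + k, b + k) := by
  constructor
  · rintro ⟨⟨k, l⟩, idem, rfl⟩
    obtain rfl : k = l := bmul_self_eq_iff.1 idem
    exact ⟨k - b, bmul_mk_self a b k⟩
  · rintro ⟨k, rfl⟩
    exact ⟨(b + k, b + k), bmul_self_eq_iff.2 rfl, by rw [bmul_mk_self, Nat.add_sub_cancel_left]⟩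

theorem bmul_bmul_add_add (i j m n k : ℕ) :
    bmul (bmul (i, m) (m + k, n + k)) (n, j) = (i + k, j + k) := by
  simp only [bmul, Prod.mk.injEq]
  omega

theorem mapsTo_bmul_bmul_bDown (i j m n : ℕ) :
    Set.MapsTo (fun x => bmul (bmul (i, m) x) (n, j)) (bDown (m, n)) (bDown (i, j)) := by
  intro x hx
  obtain ⟨k, rfl⟩ := mem_bDown_iff.1 hx
  exact mem_bDown_iff.2 ⟨k, bmul_bmul_add_add i j m n k⟩

theorem leftInvOn_bmul_bmul_bDown (i j m n : ℕ) :
    Set.LeftInvOn (fun y => bmul (bmul (m, i) y) (j, n)) (fun x => bmul (bmul (i, m) x) (n, j))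
      (bDown (m, n)) := by
  intro x hx
  obtain ⟨k, rfl⟩ := mem_bDown_iff.1 hx
  simp only [bmul_bmul_add_add]

/-- The bijection of `↓≼ q^m p^n` onto `↓≼ q^i p^j` given by `x ↦ q^i p^m · x · q^n p^j`, with
inverse `y ↦ q^m p^i · y · q^j p^n`. As a `PartialEquiv` it keeps both translations defined on the
whole monoid, where shift-continuity applies to them; `i j` index the target, `m n` the source. -/
def bDownPartialEquiv (i j m n : ℕ) : PartialEquiv (ℕ × ℕ) (ℕ × ℕ) where
  toFun x := bmul (bmul (i, m) x) (n, j)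
  invFun y := bmul (bmul (m, i) y) (j, n)
  source := bDown (m, n)
  target := bDown (i, j)
  map_source' := mapsTo_bmul_bmul_bDown i j m n
  map_target' := mapsTo_bmul_bmul_bDown m n i j
  left_inv' := leftInvOn_bmul_bmul_bDown i j m n
  right_inv' := leftInvOn_bmul_bmul_bDown m n i j

/-- `bDownPartialEquiv` as a partial homeomorphism for a shift-continuous topology. It is not an
`OpenPartialHomeomorph`, since the down-sets need not be open. -/
def bDownPartialHomeomorph [TopologicalSpace (ℕ × ℕ)]
    (hleft : ∀ a : ℕ × ℕ, Continuous fun x => bmul a x)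
    (hright : ∀ a : ℕ × ℕ, Continuous fun x => bmul x a) (i j m n : ℕ) :
    PartialHomeomorph (ℕ × ℕ) (ℕ × ℕ) where
  toPartialEquiv := bDownPartialEquiv i j m n
  continuousOn_toFun := ((hright (n, j)).comp (hleft (i, m))).continuousOn
  continuousOn_invFun := ((hright (j, n)).comp (hleft (m, i))).continuousOn

theorem stmt12_general (τ : TopologicalSpace (ℕ × ℕ))
    (hleft : ∀ a : ℕ × ℕ, @Continuous (ℕ × ℕ) (ℕ × ℕ) τ τ (fun x => bmul a x))
    (hright : ∀ a : ℕ × ℕ, @Continuous (ℕ × ℕ) (ℕ × ℕ) τ τ (fun x => bmul x a))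
    (i j m n : ℕ)
    (f : ℕ × ℕ → ℕ × ℕ) (hf : f = fun x => bmul (bmul (i, m) x) (n, j))
    (g : ℕ × ℕ → ℕ × ℕ) (hg : g = fun x => bmul (bmul (m, i) x) (j, n)) :
    (∀ k : ℕ, f (m + k, n + k) = (i + k, j + k)) ∧
    f '' bDown (m, n) = bDown (i, j) ∧
    g '' bDown (i, j) = bDown (m, n) ∧
    (∀ x ∈ bDown (m, n), g (f x) = x) ∧
    (∀ y ∈ bDown (i, j), f (g y) = y) ∧
    ∃ h : @Homeomorph (bDown (m, n)) (bDown (i, j))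
        (subT τ (bDown (m, n))) (subT τ (bDown (i, j))),
      (∀ x : bDown (m, n), (h x : ℕ × ℕ) = f x) ∧
      (∀ y : bDown (i, j), (h.symm y : ℕ × ℕ) = g y) := by
  subst hf hg
  let e := bDownPartialHomeomorph hleft hright i j m n
  exact ⟨bmul_bmul_add_add i j m n, e.image_source_eq_target, e.symm_image_target_eq_source,
    fun _ => e.left_inv, fun _ => e.right_inv,
    e.toHomeomorphSourceTarget, fun _ => rfl, fun _ => rfl⟩

/-- The map `x ↦ q^i p^m · x · q^n p^j` restricts to a homeomorphism of `↓≼ q^m p^n`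
onto `↓≼ q^i p^j` (sending `q^{m+k} p^{n+k}` to `q^{i+k} p^{j+k}`), whose inverse is the
restriction of `x ↦ q^m p^i · x · q^j p^n`. -/
theorem stmt12 (τ : TopologicalSpace (ℕ × ℕ))
    (hT1 : @T1Space (ℕ × ℕ) τ)
    (hleft : ∀ a : ℕ × ℕ, @Continuous (ℕ × ℕ) (ℕ × ℕ) τ τ (fun x => bmul a x))
    (hright : ∀ a : ℕ × ℕ, @Continuous (ℕ × ℕ) (ℕ × ℕ) τ τ (fun x => bmul x a))
    (i j m n : ℕ)
    (f : ℕ × ℕ → ℕ × ℕ) (hf : f = fun x => bmul (bmul (i, m) x) (n, j))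
    (g : ℕ × ℕ → ℕ × ℕ) (hg : g = fun x => bmul (bmul (m, i) x) (j, n)) :
    (∀ k : ℕ, f (m + k, n + k) = (i + k, j + k)) ∧
    f '' bDown (m, n) = bDown (i, j) ∧
    g '' bDown (i, j) = bDown (m, n) ∧
    (∀ x ∈ bDown (m, n), g (f x) = x) ∧
    (∀ y ∈ bDown (i, j), f (g y) = y) ∧
    ∃ h : @Homeomorph (bDown (m, n)) (bDown (i, j))
        (subT τ (bDown (m, n))) (subT τ (bDown (i, j))),
      (∀ x : bDown (m, n), (h x : ℕ × ℕ) = f x) ∧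
      (∀ y : bDown (i, j), (h.symm y : ℕ × ℕ) = g y) :=
  stmt12_general τ hleft hright i j m n f hf g hg
end
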